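/- arXiv:2103.08703 — 3 statements merged into one kernel-verified Lean document; each statement's English description precedes it below -/
import Mathlib

section
/- Let l be an odd prime, k a positive integer, p a prime different from l, and r ≥ 1 such that q = p^r satisfies q ≡ −1 (mod l^k). Then M_{l^k}(𝔽_{q²}) = l^k + 1; that is, there exists a set of l^k + 1 pairwise mutually unbiased orthonormal bases of 𝔽_{q²}^{l^k}, and no set of l^k + 2 such bases exists. -/
open Finset

/-- The σ-Hermitian inner product on `F^d`, where σ is the `q`-power Frobenius. -/
def hermInner {F : Type*} [Field F] (q : ℕ) {d : ℕ} (u v : Fin d → F) : F :=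
  ∑ j, (u j) ^ q * v j

/-- Orthonormal basis: pairwise Hermitian inner products given by the Kronecker delta. -/
def IsON {F : Type*} [Field F] (q : ℕ) {d : ℕ} (b : Fin d → Fin d → F) : Prop :=
  ∀ i j, hermInner q (b i) (b j) = if i = j then 1 else 0

/-- Mutually unbiased bases: all relative norms of cross inner products equal `(d : F)⁻¹`. -/
def IsMUB {F : Type*} [Field F] (q : ℕ) {d : ℕ} (b c : Fin d → Fin d → F) : Prop :=
  ∀ i j, (hermInner q (b i) (c j)) ^ (q + 1) = (d : F)⁻¹

/-!
Write `P v` for the rank-one matrix `v v*` of a vector `v`; then `u* P(v) u = N⟨u, v⟩`.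

Upper bound: evaluating a linear combination `∑ c_{b,i} P(B_{b,i})` at a member `B_{b,j}` of a
family of `m` mutually unbiased bases returns `c_{b,j}` plus `d⁻¹` times the sum of the coefficients
outside the `b`-th basis, and the trace returns the sum of all coefficients. So the combination
together with the coefficient sums of all bases but one determines the coefficients, whence
`m d ≤ d² + (m - 1)`, that is `m ≤ d + 1`.

Lower bound: let `E` be the field with `l ^ k` elements, which indexes the coordinates, and `ψ` a
nontrivial additive character of `E` with values in `F`. As `l ∣ q + 1`, conjugation inverts the
values of `ψ`. Add to the standard basis the bases `B_a`, `a ∈ E`, formed by the multiples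
`s ψ(a x² + b x)` of quadratic phases, with `N(s) = d⁻¹`: the inner products between `B_a` and
`B_{a'}` are quadratic Gauss sums, whose relative norm is `d` when `a ≠ a'`.
-/

/-- A family of pairwise mutually unbiased orthonormal bases of `F^d`. -/
def IsMUBFamily {F ι : Type*} [Field F] (q : ℕ) {d : ℕ} (B : ι → Fin d → Fin d → F) : Prop :=
  (∀ i, IsON q (B i)) ∧ ∀ i j, i ≠ j → IsMUB q (B i) (B j)

theorem IsMUBFamily.comp_injective {F ι κ : Type*} [Field F] {q d : ℕ}
    {B : ι → Fin d → Fin d → F} (hB : IsMUBFamily q B) {f : κ → ι} (hf : Function.Injective f) :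
    IsMUBFamily q (B ∘ f) :=
  ⟨fun i => hB.1 (f i), fun i j hij => hB.2 (f i) (f j) (hf.ne hij)⟩

section Conjugation

variable {F : Type*} [Field F] [Fintype F] {q d : ℕ}

theorem ne_zero_of_card_eq_sq (hF : Fintype.card F = q ^ 2) : q ≠ 0 := by
  rintro rfl
  simp at hF

theorem exists_ringHom_eq_pow (hF : Fintype.card F = q ^ 2) : ∃ σ : F →+* F, ∀ x, σ x = x ^ q := by
  obtain ⟨p, -, n, hp, hcard⟩ := FiniteField.card' F
  have : Fact p.Prime := ⟨hp⟩
  have : CharP F p := charP_of_card_eq_prime_pow hcard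
  have hdvd : q ∣ p ^ (n : ℕ) := ⟨q, by rw [← hcard, hF, sq]⟩
  obtain ⟨r, -, rfl⟩ := (Nat.dvd_prime_pow hp).1 hdvd
  exact ⟨iterateFrobenius F p r, iterateFrobenius_def p r⟩

theorem sum_pow_of_card_eq_sq (hF : Fintype.card F = q ^ 2) {ι : Type*} [Fintype ι] (f : ι → F) :
    (∑ i, f i) ^ q = ∑ i, f i ^ q := by
  obtain ⟨σ, hσ⟩ := exists_ringHom_eq_pow hF
  simp only [← hσ, map_sum]

theorem natCast_pow_of_card_eq_sq (hF : Fintype.card F = q ^ 2) (n : ℕ) : (n : F) ^ q = n := by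
  obtain ⟨σ, hσ⟩ := exists_ringHom_eq_pow hF
  rw [← hσ, map_natCast]

theorem natCast_eq_zero_of_card_eq_sq (hF : Fintype.card F = q ^ 2) : (q : F) = 0 := by
  have hcast : ((q ^ 2 : ℕ) : F) = 0 := hF ▸ FiniteField.cast_card_eq_zero F
  simpa using hcast

theorem card_units_of_card_eq_sq (hF : Fintype.card F = q ^ 2) :
    Nat.card Fˣ = (q - 1) * (q + 1) := by
  classical
  rw [Nat.card_eq_fintype_card, Fintype.card_units, hF, mul_comm]
  exact Nat.sq_sub_sq q 1

theorem hermInner_pow (hF : Fintype.card F = q ^ 2) (u v : Fin d → F) :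
    hermInner q u v ^ q = hermInner q v u := by
  unfold hermInner
  rw [sum_pow_of_card_eq_sq hF]
  refine Fintype.sum_congr _ _ fun j => ?_
  rw [mul_pow, ← pow_mul, ← sq, ← hF, FiniteField.pow_card, mul_comm]

theorem IsMUB.symm (hF : Fintype.card F = q ^ 2) {b c : Fin d → Fin d → F} (h : IsMUB q b c) :
    IsMUB q c b := fun i j => by
  rw [← hermInner_pow hF, ← pow_mul, mul_comm, pow_mul, h j i, inv_pow,
    natCast_pow_of_card_eq_sq hF]

end Conjugation

section UpperBound

open Matrix

variable {F ι : Type*} [Field F] {q d : ℕ}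

/-- The rank-one matrix `v v*`; for a unit vector `v` it is the orthogonal projector onto the line
spanned by `v`. -/
def rankOne (q : ℕ) (v : Fin d → F) : Matrix (Fin d) (Fin d) F :=
  vecMulVec v (v ^ q)

theorem trace_rankOne (v : Fin d → F) : (rankOne q v).trace = hermInner q v v := by
  rw [rankOne, trace_vecMulVec, dotProduct_comm]
  rfl

theorem IsMUBFamily.trace_sum_rankOne [Fintype ι] {B : ι → Fin d → Fin d → F}
    (hB : IsMUBFamily q B) (c : ι × Fin d → F) :
    (∑ s, c s • rankOne q (B s.1 s.2)).trace = ∑ b, ∑ i, c (b, i) := by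
  simp [trace_sum, trace_rankOne, hB.1 _ _ _, Fintype.sum_prod_type]

theorem IsON.sum_mul_hermInner_pow {b : Fin d → Fin d → F} (hb : IsON q b) (c : Fin d → F)
    (j : Fin d) : ∑ i, c i * hermInner q (b j) (b i) ^ (q + 1) = c j := by
  simp [hb j, ite_pow]

variable [Fintype F]

theorem dotProduct_rankOne_mulVec (hF : Fintype.card F = q ^ 2) (u v : Fin d → F) :
    u ^ q ⬝ᵥ rankOne q v *ᵥ u = hermInner q u v ^ (q + 1) := by
  rw [rankOne, vecMulVec_mulVec, pow_succ', hermInner_pow hF]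
  simp [hermInner, dotProduct, Finset.sum_mul, mul_assoc]

theorem IsMUBFamily.dotProduct_sum_rankOne_mulVec [Fintype ι] [DecidableEq ι]
    (hF : Fintype.card F = q ^ 2) {B : ι → Fin d → Fin d → F} (hB : IsMUBFamily q B)
    (c : ι × Fin d → F) (b : ι) (j : Fin d) :
    B b j ^ q ⬝ᵥ (∑ s, c s • rankOne q (B s.1 s.2)) *ᵥ B b j =
      c (b, j) + (∑ b' ∈ univ.erase b, ∑ i, c (b', i)) * (d : F)⁻¹ := by
  calc B b j ^ q ⬝ᵥ (∑ s, c s • rankOne q (B s.1 s.2)) *ᵥ B b j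
      = ∑ b', ∑ i, c (b', i) * hermInner q (B b j) (B b' i) ^ (q + 1) := by
        simp only [sum_mulVec, dotProduct_sum, smul_mulVec, dotProduct_smul, smul_eq_mul,
          dotProduct_rankOne_mulVec hF, Fintype.sum_prod_type]
    _ = c (b, j) + ∑ b' ∈ univ.erase b, ∑ i, c (b', i) * (d : F)⁻¹ := by
        rw [← add_sum_erase _ _ (mem_univ b), (hB.1 b).sum_mul_hermInner_pow]
        congr! 4 with b' hb' i
        exact hB.2 b b' (ne_of_mem_erase hb').symm j i
    _ = _ := by simp only [sum_mul]

theorem IsMUBFamily.linearIndependent_rankOne_prod_indicator [Finite ι] [DecidableEq ι]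
    (hF : Fintype.card F = q ^ 2) {B : ι → Fin d → Fin d → F} (hB : IsMUBFamily q B) (b₀ : ι) :
    LinearIndependent F fun s : ι × Fin d =>
      (rankOne q (B s.1 s.2), fun b : {b // b ≠ b₀} => if s.1 = b then (1 : F) else 0) := by
  have := Fintype.ofFinite ι
  rw [Fintype.linearIndependent_iff]
  intro c hc
  have hcomb : ∑ s, c s • rankOne q (B s.1 s.2) = 0 := by
    simpa [Prod.fst_sum] using congrArg Prod.fst hc
  have hne : ∀ b, b ≠ b₀ → ∑ i, c (b, i) = 0 := fun b hb => by
    simpa [Prod.snd_sum, Fintype.sum_prod_type_right] using congrFun (congrArg Prod.snd hc) ⟨b, hb⟩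
  have htotal : ∑ b, ∑ i, c (b, i) = 0 := by
    rw [← hB.trace_sum_rankOne, hcomb, trace_zero]
  have hrow : ∀ b, ∑ i, c (b, i) = 0 := fun b => by
    by_cases hb : b = b₀
    · rwa [Fintype.sum_eq_single b₀ hne, ← hb] at htotal
    · exact hne b hb
  rintro ⟨b, j⟩
  simpa [hcomb, hrow] using (hB.dotProduct_sum_rankOne_mulVec hF c b j).symm

theorem IsMUBFamily.card_le [Fintype ι] (hF : Fintype.card F = q ^ 2) (hd : 2 ≤ d)
    {B : ι → Fin d → Fin d → F} (hB : IsMUBFamily q B) : Fintype.card ι ≤ d + 1 := by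
  classical
  rcases isEmpty_or_nonempty ι with _ | ⟨⟨b₀⟩⟩
  · simp
  have hdim : Fintype.card ι * d ≤ d * d + (Fintype.card ι - 1) := by
    simpa [Module.finrank_matrix] using
      (hB.linearIndependent_rankOne_prod_indicator hF b₀).fintype_card_le_finrank
  by_contra! hlt
  obtain ⟨n, hn⟩ := Nat.exists_eq_add_of_lt hlt
  rw [hn, Nat.add_sub_cancel] at hdim
  nlinarith

end UpperBound

section Cyclic

theorem exists_pow_eq_of_pow_eq_one_of_card {G : Type*} [CommGroup G] [IsCyclic G] [Finite G]
    {m n : ℕ} (hG : Nat.card G = m * n) {x : G} (hx : x ^ m = 1) : ∃ y : G, y ^ n = x := by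
  have hmn : 0 < m * n := hG ▸ Nat.card_pos
  have hle : (powMonoidHom n : G →* G).range ≤ (powMonoidHom m : G →* G).ker := by
    rintro _ ⟨y, rfl⟩
    rw [MonoidHom.mem_ker, powMonoidHom_apply, powMonoidHom_apply, ← pow_mul, mul_comm, ← hG,
      pow_card_eq_one']
  have hcard :
      Nat.card (powMonoidHom m : G →* G).ker ≤ Nat.card (powMonoidHom n : G →* G).range := by
    rw [IsCyclic.card_powMonoidHom_ker, IsCyclic.card_powMonoidHom_range, hG,
      Nat.gcd_mul_right_left, Nat.gcd_mul_left_left,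
      Nat.mul_div_cancel _ (pos_of_mul_pos_right hmn m.zero_le)]
  exact (Subgroup.eq_of_le_of_card_ge hle hcard).ge hx

theorem hasEnoughRootsOfUnity_of_dvd_card_units {F : Type*} [Field F] [Finite F] {n : ℕ}
    (hn : n ∣ Nat.card Fˣ) : HasEnoughRootsOfUnity F n := by
  obtain ⟨g, hg⟩ := IsCyclic.exists_ofOrder_eq_natCard (α := Fˣ)
  have : NeZero (Nat.card Fˣ) := ⟨Nat.card_pos.ne'⟩
  have hprim : IsPrimitiveRoot (g : F) (Nat.card Fˣ) :=
    IsPrimitiveRoot.coe_units_iff.2 (hg ▸ IsPrimitiveRoot.orderOf g)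
  have : HasEnoughRootsOfUnity F (Nat.card Fˣ) := ⟨⟨g, hprim⟩, rootsOfUnity.isCyclic F _⟩
  exact HasEnoughRootsOfUnity.of_dvd F hn

theorem exists_pow_succ_eq {F : Type*} [Field F] [Fintype F] {q : ℕ}
    (hF : Fintype.card F = q ^ 2) {a : F} (ha : a ≠ 0) (haq : a ^ q = a) :
    ∃ s : F, s ^ (q + 1) = a := by
  have hq : 1 ≤ q := Nat.one_le_iff_ne_zero.2 (ne_zero_of_card_eq_sq hF)
  have hone : Units.mk0 a ha ^ (q - 1) = 1 := by
    ext
    rw [Units.val_pow_eq_pow_val, Units.val_mk0, Units.val_one, pow_sub₀ _ ha hq, haq, pow_one,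
      mul_inv_cancel₀ ha]
  obtain ⟨y, hy⟩ := exists_pow_eq_of_pow_eq_one_of_card (card_units_of_card_eq_sq hF) hone
  exact ⟨y, by simpa using congrArg Units.val hy⟩

theorem exists_isPrimitive_addChar {E F : Type*} [Field E] [Finite E] [Field F] {n : ℕ}
    [NeZero n] [HasEnoughRootsOfUnity F n] (hE : (n : E) = 0) :
    ∃ ψ : AddChar E F, ψ.IsPrimitive := by
  have hexp : Monoid.exponent (Multiplicative E) ∣ n :=
    Monoid.exponent_dvd_of_forall_pow_eq_one fun x => by
      apply Multiplicative.toAdd.injective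
      simp [hE]
  have := HasEnoughRootsOfUnity.of_dvd F hexp
  obtain ⟨φ, hφ⟩ := CommGroup.exists_apply_ne_one_of_hasEnoughRootsOfUnity (Multiplicative E) F
    (a := .ofAdd 1) (by simp)
  exact ⟨AddChar.toMonoidHomEquiv.symm ((Units.coeHom F).comp φ),
    .of_ne_one fun h => hφ (Units.ext (DFunLike.congr_fun h 1))⟩

end Cyclic

section LowerBound

variable {E F : Type*} [Field E] [Field F] {q d : ℕ}

theorem addChar_pow_eq_map_neg (hE : (q : E) = -1) (ψ : AddChar E F) (x : E) :
    ψ x ^ q = ψ (-x) := by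
  rw [← AddChar.map_nsmul_eq_pow, nsmul_eq_mul, hE, neg_one_mul]

theorem addChar_pow_succ_eq_one (hE : (q : E) = -1) (ψ : AddChar E F) (x : E) :
    ψ x ^ (q + 1) = 1 := by
  rw [pow_succ, addChar_pow_eq_map_neg hE, ← AddChar.map_add_eq_mul, neg_add_cancel,
    AddChar.map_zero_eq_one]

/-- The vectors `x ↦ s ψ(a x² + b x)` for fixed `a`, indexed by `b`; the bijection `e` identifies
both the vector indices and the coordinates with elements of the field `E`. -/
def quadraticBasis (e : Fin d ≃ E) (ψ : AddChar E F) (s : F) (a : E) (j x : Fin d) : F :=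
  s * ψ (a * e x ^ 2 + e j * e x)

/-- The standard basis (at `none`) together with the bases `quadraticBasis e ψ s a` for `a : E`. -/
def quadraticBases (e : Fin d ≃ E) (ψ : AddChar E F) (s : F) : Option E → Fin d → Fin d → F
  | none => fun j => Pi.single j 1
  | some a => quadraticBasis e ψ s a

theorem isON_single (hq : q ≠ 0) : IsON q fun j : Fin d => (Pi.single j 1 : Fin d → F) :=
  fun i j => by
    simp [hermInner, Pi.single_apply, ite_pow, hq, eq_comm]

theorem isMUB_single_iff (hq : q ≠ 0) {b : Fin d → Fin d → F} :
    IsMUB q (fun j => Pi.single j 1) b ↔ ∀ x j, b j x ^ (q + 1) = (d : F)⁻¹ := by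
  simp [IsMUB, hermInner, Pi.single_apply, ite_pow, hq]

theorem isMUB_single_quadraticBasis (hq : q ≠ 0) (hE : (q : E) = -1) (e : Fin d ≃ E)
    (ψ : AddChar E F) {s : F} (hs : s ^ (q + 1) = (d : F)⁻¹) (a : E) :
    IsMUB q (fun j => Pi.single j 1) (quadraticBasis e ψ s a) :=
  (isMUB_single_iff hq).2 fun x j => by
    rw [quadraticBasis, mul_pow, hs, addChar_pow_succ_eq_one hE, mul_one]

theorem hermInner_quadraticBasis [Fintype E] (hE : (q : E) = -1) (e : Fin d ≃ E)
    (ψ : AddChar E F) (s : F) (a a' : E) (i j : Fin d) :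
    hermInner q (quadraticBasis e ψ s a i) (quadraticBasis e ψ s a' j) =
      s ^ (q + 1) * ∑ x, ψ ((a' - a) * x ^ 2 + (e j - e i) * x) := by
  rw [← Equiv.sum_comp e, mul_sum]
  refine Fintype.sum_congr _ _ fun x => ?_
  have hphase : (a' - a) * e x ^ 2 + (e j - e i) * e x =
      -(a * e x ^ 2 + e i * e x) + (a' * e x ^ 2 + e j * e x) := by ring
  rw [hphase, AddChar.map_add_eq_mul, ← addChar_pow_eq_map_neg hE, quadraticBasis, quadraticBasis]
  ring

variable [Fintype F]

theorem natCast_ne_zero_of_equiv (hF : Fintype.card F = q ^ 2) (hE : (q : E) = -1)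
    (e : Fin d ≃ E) : (d : F) ≠ 0 := by
  intro hd
  have hdvd : ringChar F ∣ Nat.card E :=
    (Nat.card_eq_of_equiv_fin e.symm).symm ▸ ringChar.dvd hd
  have : Fact (ringChar F).Prime := ⟨CharP.char_is_prime F _⟩
  have : Finite E := .of_equiv _ e
  obtain ⟨x, hx⟩ := exists_prime_addOrderOf_dvd_card' (ringChar F) hdvd
  have hchar : ringChar F ∣ q + 1 := by
    rw [← hx, addOrderOf_dvd_iff_nsmul_eq_zero, nsmul_eq_mul, Nat.cast_succ, hE, neg_add_cancel,
      zero_mul]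
  have hq : ((q + 1 : ℕ) : F) = 0 := (ringChar.spec F _).2 hchar
  simp [natCast_eq_zero_of_card_eq_sq hF] at hq

theorem sum_addChar_quadratic_pow_succ [Fintype E] (hF : Fintype.card F = q ^ 2)
    (hE : (q : E) = -1) (h2 : (2 : E) ≠ 0) {ψ : AddChar E F} (hψ : ψ.IsPrimitive) {a : E}
    (ha : a ≠ 0) (b : E) :
    (∑ x, ψ (a * x ^ 2 + b * x)) ^ (q + 1) = Fintype.card E := by
  classical
  have hshift : ∀ y t : E, ψ (a * (t + y) ^ 2 + b * (t + y)) * ψ (a * y ^ 2 + b * y) ^ q =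
      ψ (a * t ^ 2 + b * t) * ψ (y * (2 * a * t)) := fun y t => by
    rw [addChar_pow_eq_map_neg hE, ← AddChar.map_add_eq_mul, ← AddChar.map_add_eq_mul]
    congr 1
    ring
  calc (∑ x, ψ (a * x ^ 2 + b * x)) ^ (q + 1)
      = ∑ y, ∑ x, ψ (a * x ^ 2 + b * x) * ψ (a * y ^ 2 + b * y) ^ q := by
        rw [pow_succ', sum_pow_of_card_eq_sq hF, sum_mul_sum, sum_comm]
    _ = ∑ y, ∑ t, ψ (a * t ^ 2 + b * t) * ψ (y * (2 * a * t)) := by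
        refine Fintype.sum_congr _ _ fun y => ?_
        rw [← Equiv.sum_comp (Equiv.addRight y)]
        simp only [Equiv.coe_addRight, hshift]
    _ = ∑ t, ψ (a * t ^ 2 + b * t) * if 2 * a * t = 0 then (Fintype.card E : F) else 0 := by
        rw [sum_comm]
        refine Fintype.sum_congr _ _ fun t => ?_
        rw [← mul_sum, AddChar.sum_mulShift _ hψ, Nat.cast_ite, Nat.cast_zero]
    _ = Fintype.card E := by simp [h2, ha]

theorem isON_quadraticBasis (hF : Fintype.card F = q ^ 2) (hE : (q : E) = -1) (e : Fin d ≃ E)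
    {ψ : AddChar E F} (hψ : ψ.IsPrimitive) {s : F} (hs : s ^ (q + 1) = (d : F)⁻¹) (a : E) :
    IsON q (quadraticBasis e ψ s a) := fun i j => by
  classical
  have : Fintype E := .ofEquiv _ e
  have hd : Fintype.card E = d := by simpa using (Fintype.card_congr e).symm
  calc hermInner q (quadraticBasis e ψ s a i) (quadraticBasis e ψ s a j)
      = (d : F)⁻¹ * ∑ x, ψ (x * (e j - e i)) := by
        simp only [hermInner_quadraticBasis hE, hs, sub_self, zero_mul, zero_add, mul_comm]
    _ = if i = j then 1 else 0 := by
        rw [AddChar.sum_mulShift _ hψ, hd]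
        simp [sub_eq_zero, eq_comm (a := i), natCast_ne_zero_of_equiv hF hE e]

theorem isMUB_quadraticBasis (hF : Fintype.card F = q ^ 2) (hE : (q : E) = -1) (h2 : (2 : E) ≠ 0)
    (e : Fin d ≃ E) {ψ : AddChar E F} (hψ : ψ.IsPrimitive) {s : F}
    (hs : s ^ (q + 1) = (d : F)⁻¹) {a a' : E} (ha : a ≠ a') :
    IsMUB q (quadraticBasis e ψ s a) (quadraticBasis e ψ s a') := fun i j => by
  have : Fintype E := .ofEquiv _ e
  have hd : Fintype.card E = d := by simpa using (Fintype.card_congr e).symm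
  rw [hermInner_quadraticBasis hE, hs, mul_pow,
    sum_addChar_quadratic_pow_succ hF hE h2 hψ (sub_ne_zero.2 ha.symm), hd, pow_succ, inv_pow,
    natCast_pow_of_card_eq_sq hF, mul_assoc,
    inv_mul_cancel₀ (natCast_ne_zero_of_equiv hF hE e), mul_one]

theorem isMUBFamily_quadraticBases (hF : Fintype.card F = q ^ 2) (hE : (q : E) = -1)
    (h2 : (2 : E) ≠ 0) (e : Fin d ≃ E) {ψ : AddChar E F} (hψ : ψ.IsPrimitive) {s : F}
    (hs : s ^ (q + 1) = (d : F)⁻¹) : IsMUBFamily q (quadraticBases e ψ s) := by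
  have hq := ne_zero_of_card_eq_sq hF
  have hsingle := isMUB_single_quadraticBasis hq hE e ψ hs
  refine ⟨?_, ?_⟩
  · rintro (_ | a)
    exacts [isON_single hq, isON_quadraticBasis hF hE e hψ hs a]
  · rintro (_ | a) (_ | a') haa'
    exacts [absurd rfl haa', hsingle a', (hsingle a).symm hF,
      isMUB_quadraticBasis hF hE h2 e hψ hs fun h => haa' (congrArg some h)]

theorem exists_isMUBFamily_card_succ (hF : Fintype.card F = q ^ 2) (hE : (q : E) = -1)
    (h2 : (2 : E) ≠ 0) (e : Fin d ≃ E) :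
    ∃ B : Fin (d + 1) → Fin d → Fin d → F, IsMUBFamily q B := by
  have : Finite E := .of_equiv _ e
  have : HasEnoughRootsOfUnity F (q + 1) := hasEnoughRootsOfUnity_of_dvd_card_units
    (card_units_of_card_eq_sq hF ▸ dvd_mul_left _ _)
  obtain ⟨ψ, hψ⟩ := exists_isPrimitive_addChar (E := E) (F := F) (n := q + 1) (by simp [hE])
  obtain ⟨s, hs⟩ := exists_pow_succ_eq hF (inv_ne_zero (natCast_ne_zero_of_equiv hF hE e))
    (by rw [inv_pow, natCast_pow_of_card_eq_sq hF])
  exact ⟨_, (isMUBFamily_quadraticBases hF hE h2 e hψ hs).comp_injective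
    ((finSuccEquiv d).trans e.optionCongr).injective⟩

end LowerBound

theorem stmt4_general {l k q : ℕ} (hl : l.Prime) (hlodd : Odd l) (hk : k ≠ 0) (hlq : l ∣ q + 1)
    {F : Type*} [Field F] [Fintype F] (hF : Fintype.card F = q ^ 2) :
    IsGreatest {m : ℕ | ∃ B : Fin m → Fin (l ^ k) → Fin (l ^ k) → F, IsMUBFamily q B}
      (l ^ k + 1) := by
  have : Fact l.Prime := ⟨hl⟩
  refine ⟨?_, fun m ⟨B, hB⟩ => ?_⟩
  · have hE : (q : GaloisField l k) = -1 := eq_neg_of_add_eq_zero_left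
      (by exact_mod_cast (CharP.cast_eq_zero_iff _ l (q + 1)).2 hlq)
    have h2 : (2 : GaloisField l k) ≠ 0 :=
      Ring.two_ne_zero (by rw [ringChar.eq _ l]; exact hlodd.ne_two_of_dvd_nat dvd_rfl)
    exact exists_isMUBFamily_card_succ hF hE h2
      (Finite.equivFinOfCardEq (GaloisField.card l k hk)).symm
  · simpa using hB.card_le hF (Nat.one_lt_pow hk hl.one_lt)

/-- Let `l` be an odd prime, `k ≥ 1`, `p` a prime different from `l` and
`q = p^r ≡ −1 (mod l^k)`.  Then `M_{l^k}(𝔽_{q²}) = l^k + 1`: there exist `l^k + 1` pairwise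
mutually unbiased orthonormal bases of `𝔽_{q²}^{l^k}`, and no `l^k + 2` such bases exist. -/
theorem stmt4 (l k p r : ℕ) (hl : l.Prime) (hlodd : Odd l) (hk : 1 ≤ k)
    (hp : p.Prime) (hpl : p ≠ l) (hr : 1 ≤ r) (q : ℕ) (hq : q = p ^ r)
    (hcong : l ^ k ∣ q + 1)
    (F : Type) [Field F] [Fintype F] (hF : Fintype.card F = q ^ 2) :
    (∃ B : Fin (l ^ k + 1) → Fin (l ^ k) → Fin (l ^ k) → F,
        (∀ i, IsON q (B i)) ∧ ∀ i j, i ≠ j → IsMUB q (B i) (B j))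
    ∧ ¬ ∃ B : Fin (l ^ k + 2) → Fin (l ^ k) → Fin (l ^ k) → F,
        (∀ i, IsON q (B i)) ∧ ∀ i j, i ≠ j → IsMUB q (B i) (B j) := by
  have hk₀ : k ≠ 0 := Nat.one_le_iff_ne_zero.1 hk
  have h := stmt4_general hl hlodd hk₀ ((dvd_pow_self l hk₀).trans hcong) hF
  exact ⟨h.1, fun hB => (Nat.lt_succ_self _).not_ge (h.2 hB)⟩
end

section
/- Let d ≥ 2 be an integer, write d = ∏_{j=1}^n l_j^{k_j} as a product of prime powers with l_1^{k_1} < l_2^{k_2} < … < l_n^{k_n}. Then there are infinitely many primes p for which there exists an integer r_p ≥ 1 such that, setting q = p^{r_p}, the space 𝔽_{q²}^d contains a set of l_1^{k_1} + 1 pairwise mutually unbiased orthonormal bases; i.e., M_d(𝔽_{q²}) ≥ l_1^{k_1} + 1 for infinitely many such prime powers q of distinct characteristics. -/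
open Finset

/-!
Let `K` be a finite field, `ψ` a primitive additive character of `K` with values of relative norm
one, and suppose that for each `a : K` there is a unimodular function `f a` with
`f a (x + y) = f a x * f a y * ψ (a * x * y)`. For fixed `a`, the vectors
`x ↦ c * f a x * ψ (i * x)` form an orthonormal basis by orthogonality of characters, and the inner
product of two vectors belonging to `a ≠ b` is a multiple of a Gauss sum with quadratic coefficient
`b - a`, whose relative norm is `|K|`. Together with the standard basis this gives `|K| + 1`
mutually unbiased bases.

In odd characteristic one takes `f a x = ψ (a * x ^ 2 / 2)`. In characteristic two one takes
`f a x = I ^ Q x` with `I ^ 2 = -1`, where `Q` is a `ℤ/4`-valued quadratic form refining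
`2 * Tr (a * x * y)`; it is obtained by lifting the Gram matrix of `Tr (a * x * y)` to `ℤ`.

For `|K| = l ^ k` this only needs a primitive `4 * l ^ k`-th root of unity of relative norm one.
If `m` is the smallest prime power factor of `d`, coordinatewise tensor products of such families
give `m + 1` mutually unbiased bases in dimension `d`, provided there is a primitive `4 * d`-th root
of unity of relative norm one; `𝔽_{q²}` contains one as soon as `4 * d ∣ q + 1`. By Dirichlet's
theorem infinitely many primes `p` satisfy `4 * d ∣ p + 1`, and then every odd power `q` of `p`
works.
-/

section Forms

variable {F ι : Type*} [CommSemiring F] (σ : F →+* F)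

/-- The form `⟨u, v⟩ = ∑ σ(u_j) v_j` attached to an arbitrary endomorphism `σ`; with `σ` the
`q`-power Frobenius it is `hermInner q`, over any finite coordinate set. -/
def sesqForm [Fintype ι] (u v : ι → F) : F :=
  ∑ j, σ (u j) * v j

/-- The norm `α ↦ σ(α) α`, which is `α ↦ α ^ (q + 1)` when `σ` is the `q`-power Frobenius. -/
def relNorm : F →* F :=
  (σ : F →* F) * MonoidHom.id F

theorem relNorm_apply (x : F) : relNorm σ x = σ x * x :=
  rfl

theorem relNorm_map (x : F) : relNorm σ (σ x) = σ (relNorm σ x) := by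
  simp only [relNorm_apply, map_mul]

theorem sesqForm_single_left [Fintype ι] [DecidableEq ι] (i : ι)
    (v : ι → F) : sesqForm σ (Pi.single i 1) v = v i := by
  simp [sesqForm, Pi.single_apply, apply_ite σ]

theorem sesqForm_single_right [Fintype ι] [DecidableEq ι] (i : ι)
    (u : ι → F) : sesqForm σ u (Pi.single i 1) = σ (u i) := by
  simp [sesqForm, Pi.single_apply]

theorem sesqForm_comp_equiv {κ : Type*} [Fintype ι] [Fintype κ] (e : κ ≃ ι) (u v : ι → F) :
    sesqForm σ (fun x => u (e x)) (fun x => v (e x)) = sesqForm σ u v :=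
  Equiv.sum_comp e fun x => σ (u x) * v x

theorem sesqForm_pi {J : Type*} [Fintype J] [DecidableEq J] {ι : J → Type*}
    [∀ j, Fintype (ι j)] (u v : ∀ j, ι j → F) :
    sesqForm σ (fun x : ∀ j, ι j => ∏ j, u j (x j)) (fun x => ∏ j, v j (x j)) =
      ∏ j, sesqForm σ (u j) (v j) := by
  simp only [sesqForm, map_prod, ← prod_mul_distrib]
  exact (Fintype.prod_sum fun j x => σ (u j x) * v j x).symm

end Forms

/-- A family of pairwise mutually unbiased orthonormal bases of `F^ι` for the form `sesqForm σ`;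
`B a i` is the `i`-th vector of the `a`-th basis. -/
structure IsMUBFamily_s9 {F ι A : Type*} [Field F] [Fintype ι] [DecidableEq ι] (σ : F →+* F)
    (B : A → ι → ι → F) : Prop where
  orthonormal : ∀ a i j, sesqForm σ (B a i) (B a j) = if i = j then 1 else 0
  unbiased : Pairwise fun a b => ∀ i j,
    relNorm σ (sesqForm σ (B a i) (B b j)) = (Fintype.card ι : F)⁻¹

namespace IsMUBFamily_s9

variable {F A : Type*} [Field F] {σ : F →+* F}

theorem reindex {A' ι κ : Type*} [Fintype ι] [DecidableEq ι] [Fintype κ] [DecidableEq κ]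
    {B : A → ι → ι → F} (hB : IsMUBFamily_s9 σ B) (f : A' ↪ A) (e : κ ≃ ι) :
    IsMUBFamily_s9 σ fun a i x => B (f a) (e i) (e x) where
  orthonormal a i j := by
    rw [sesqForm_comp_equiv σ e (B (f a) (e i)), hB.orthonormal]
    simp only [EmbeddingLike.apply_eq_iff_eq]
  unbiased a b hab i j := by
    rw [sesqForm_comp_equiv σ e (B (f a) (e i)), hB.unbiased (f.injective.ne hab),
      Fintype.card_congr e]

theorem pi {J : Type*} [Fintype J] [DecidableEq J] {ι : J → Type*} [∀ j, Fintype (ι j)]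
    [∀ j, DecidableEq (ι j)] {B : ∀ j, A → ι j → ι j → F} (hB : ∀ j, IsMUBFamily_s9 σ (B j)) :
    IsMUBFamily_s9 σ fun a (i x : ∀ j, ι j) => ∏ j, B j a (i j) (x j) where
  orthonormal a i i' := by
    simp only [sesqForm_pi, (hB _).orthonormal, Fintype.prod_ite_zero, prod_const_one,
      funext_iff]
  unbiased a b hab i i' := by
    simp only [sesqForm_pi, map_prod, (hB _).unbiased hab, prod_inv_distrib, Fintype.card_pi,
      Nat.cast_prod]

theorem exists_fin {ι : Type*} [Fintype ι] [DecidableEq ι] [Fintype A] {B : A → ι → ι → F}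
    (hB : IsMUBFamily_s9 σ B) {d m : ℕ} (hd : Fintype.card ι = d) (hm : m ≤ Fintype.card A) :
    ∃ B' : Fin m → Fin d → Fin d → F, IsMUBFamily_s9 σ B' := by
  obtain ⟨f⟩ : Nonempty (Fin m ↪ A) :=
    Function.Embedding.nonempty_of_card_le (by rwa [Fintype.card_fin])
  exact ⟨_, hB.reindex f (Fintype.equivFinOfCardEq hd).symm⟩

end IsMUBFamily_s9

/-- `g` is a unimodular solution of `g (x + y) = g x * g y * ψ (a * x * y)`: the exponential of a
quadratic polynomial with leading coefficient `a / 2`, made sense of also in characteristic two. -/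
structure IsQuadraticPhase {F K : Type*} [CommRing F] [CommRing K] (σ : F →+* F)
    (ψ : AddChar K F) (a : K) (g : K → F) : Prop where
  relNorm_eq_one : ∀ x, relNorm σ (g x) = 1
  map_add : ∀ x y, g (x + y) = g x * g y * ψ (a * x * y)

theorem map_addChar_of_relNorm_eq_one {F K : Type*} [CommRing F] [AddCommGroup K] {σ : F →+* F}
    {ψ : AddChar K F} (hψ : ∀ x, relNorm σ (ψ x) = 1) (x : K) : σ (ψ x) = ψ (-x) := by
  have hunit : IsUnit (ψ x) := .of_mul_eq_one_right _ (hψ x)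
  refine hunit.mul_right_cancel ?_
  rw [← relNorm_apply, hψ, ← AddChar.map_add_eq_mul, neg_add_cancel, AddChar.map_zero_eq_one]

namespace IsQuadraticPhase

variable {F K : Type*} [CommRing F] [CommRing K] {σ : F →+* F} {ψ : AddChar K F} {a b : K}
  {f g : K → F}

theorem map_zero (hg : IsQuadraticPhase σ ψ a g) : g 0 = 1 := by
  have hunit : IsUnit (g 0) := .of_mul_eq_one_right _ (hg.relNorm_eq_one 0)
  have h00 := hg.map_add 0 0
  rw [add_zero, mul_zero, AddChar.map_zero_eq_one, mul_one] at h00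
  exact hunit.mul_right_cancel (h00.symm.trans (one_mul _).symm)

theorem mul (hf : IsQuadraticPhase σ ψ a f) (hg : IsQuadraticPhase σ ψ b g) :
    IsQuadraticPhase σ ψ (a + b) fun x => f x * g x where
  relNorm_eq_one x := by rw [map_mul, hf.relNorm_eq_one, hg.relNorm_eq_one, one_mul]
  map_add x y := by
    rw [hf.map_add, hg.map_add, add_mul, add_mul, AddChar.map_add_eq_mul]
    ring

theorem conj (hψ : ∀ x, relNorm σ (ψ x) = 1) (hg : IsQuadraticPhase σ ψ a g) :
    IsQuadraticPhase σ ψ (-a) fun x => σ (g x) where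
  relNorm_eq_one x := by rw [relNorm_map, hg.relNorm_eq_one, map_one]
  map_add x y := by
    rw [hg.map_add, map_mul, map_mul, map_addChar_of_relNorm_eq_one hψ, neg_mul, neg_mul]

theorem linear (hψ : ∀ x, relNorm σ (ψ x) = 1) (c : K) :
    IsQuadraticPhase σ ψ 0 fun x => ψ (c * x) where
  relNorm_eq_one x := hψ _
  map_add x y := by
    rw [mul_add, AddChar.map_add_eq_mul, zero_mul, zero_mul, AddChar.map_zero_eq_one, mul_one]

theorem square (hψ : ∀ x, relNorm σ (ψ x) = 1) (c : K) :
    IsQuadraticPhase σ ψ (2 * c) fun x => ψ (c * x ^ 2) where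
  relNorm_eq_one x := hψ _
  map_add x y := by
    rw [← AddChar.map_add_eq_mul, ← AddChar.map_add_eq_mul]
    congr 1
    ring

theorem relNorm_sum [IsDomain F] [Fintype K] (hψ : ψ.IsPrimitive) (ha : IsUnit a)
    (hg : IsQuadraticPhase σ ψ a g) : relNorm σ (∑ x, g x) = Fintype.card K := by
  classical
  calc
    relNorm σ (∑ x, g x) = ∑ x, ∑ y, σ (g x) * g y := by
      rw [relNorm_apply, map_sum, sum_mul_sum]
    _ = ∑ x, ∑ t, σ (g x) * g (x + t) :=
      sum_congr rfl fun x _ => (Equiv.sum_comp (Equiv.addLeft x) fun y => σ (g x) * g y).symm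
    _ = ∑ x, ∑ t, g t * ψ (x * (a * t)) := by
      refine sum_congr rfl fun x _ => sum_congr rfl fun t _ => ?_
      rw [hg.map_add, ← mul_assoc, ← mul_assoc, ← relNorm_apply, hg.relNorm_eq_one, one_mul,
        mul_left_comm, mul_assoc]
    _ = ∑ t, g t * ∑ x, ψ (x * (a * t)) := by
      rw [sum_comm]
      simp only [mul_sum]
    _ = Fintype.card K := by
      simp only [AddChar.sum_mulShift _ hψ, ha.mul_right_eq_zero, Nat.cast_ite, Nat.cast_zero,
        mul_ite, mul_zero, sum_ite_eq', mem_univ, if_true, hg.map_zero, one_mul]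

end IsQuadraticPhase

section PhaseBases

variable {F K : Type*} [Field F] [Field K] [DecidableEq K] {σ : F →+* F} {ψ : AddChar K F}
  {f : K → K → F} {c : F}

/-- The standard basis of `F^K` (at `none`), and for each `a : K` the basis of vectors
`x ↦ c * f a x * ψ (i * x)`, indexed by `i : K`. -/
def phaseBases (ψ : AddChar K F) (f : K → K → F) (c : F) : Option K → K → K → F
  | none, i => Pi.single i 1
  | some a, i => fun x => c * (f a x * ψ (i * x))

theorem relNorm_phaseBases_some (hψ : ∀ x, relNorm σ (ψ x) = 1)
    (hf : ∀ a, IsQuadraticPhase σ ψ a (f a)) (a i x : K) :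
    relNorm σ (phaseBases ψ f c (some a) i x) = relNorm σ c := by
  rw [phaseBases, map_mul, map_mul, (hf a).relNorm_eq_one, hψ, mul_one, mul_one]

variable [Fintype K]

theorem sesqForm_phaseBases_some (hψ : ∀ x, relNorm σ (ψ x) = 1) (a b i j : K) :
    sesqForm σ (phaseBases ψ f c (some a) i) (phaseBases ψ f c (some b) j) =
      relNorm σ c * ∑ x, σ (f a x) * f b x * ψ ((j - i) * x) := by
  rw [sesqForm, mul_sum]
  refine sum_congr rfl fun x _ => ?_
  rw [phaseBases, phaseBases, map_mul, map_mul, map_addChar_of_relNorm_eq_one hψ,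
    relNorm_apply, sub_mul, sub_eq_neg_add, AddChar.map_add_eq_mul]
  ring

theorem isMUBFamily_phaseBases (hψ : ∀ x, relNorm σ (ψ x) = 1) (hprim : ψ.IsPrimitive)
    (hf : ∀ a, IsQuadraticPhase σ ψ a (f a)) (hK : (Fintype.card K : F) ≠ 0)
    (hc : relNorm σ c = (Fintype.card K : F)⁻¹) : IsMUBFamily_s9 σ (phaseBases ψ f c) where
  orthonormal
    | none, i, j => by
      rw [phaseBases, phaseBases, sesqForm_single_left, Pi.single_apply]
    | some a, i, j => by
      have hunit (x : K) : σ (f a x) * f a x = 1 := (hf a).relNorm_eq_one x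
      simp only [sesqForm_phaseBases_some hψ, hc, hunit, one_mul, mul_comm (j - i),
        AddChar.sum_mulShift _ hprim, sub_eq_zero, eq_comm (a := j), Nat.cast_ite, Nat.cast_zero,
        mul_ite, mul_zero, inv_mul_cancel₀ hK]
  unbiased
    | none, none, hab, _, _ => absurd rfl hab
    | none, some b, _, i, j => by
      rw [phaseBases, sesqForm_single_left, relNorm_phaseBases_some hψ hf, hc]
    | some a, none, _, i, j => by
      rw [phaseBases.eq_1, sesqForm_single_right, relNorm_map, relNorm_phaseBases_some hψ hf, hc,
        map_inv₀, map_natCast]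
    | some a, some b, hab, i, j => by
      have hphase : IsQuadraticPhase σ ψ (-a + b + 0)
          fun x => σ (f a x) * f b x * ψ ((j - i) * x) :=
        (((hf a).conj hψ).mul (hf b)).mul (.linear hψ _)
      have hne : -a + b + 0 ≠ 0 := by
        rwa [add_zero, neg_add_eq_sub, sub_ne_zero, ne_comm, ← Option.some_injective K |>.ne_iff]
      rw [sesqForm_phaseBases_some hψ, map_mul, hphase.relNorm_sum hprim hne.isUnit, hc,
        relNorm_apply, map_inv₀, map_natCast, inv_mul_cancel_right₀ hK]

theorem exists_isMUBFamily_of_isQuadraticPhase (hψ : ∀ x, relNorm σ (ψ x) = 1)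
    (hprim : ψ.IsPrimitive) (hK : (Fintype.card K : F) ≠ 0)
    (h : ∀ a, ∃ g, IsQuadraticPhase σ ψ a g) : ∃ B : Option K → K → K → F, IsMUBFamily_s9 σ B := by
  choose f hf using h
  -- The Gauss sum of `f 1` has relative norm `|K|`, so its inverse is a normalising constant.
  refine ⟨_, isMUBFamily_phaseBases (c := (∑ x, f 1 x)⁻¹) hψ hprim hf hK ?_⟩
  rw [relNorm_apply, map_inv₀, ← mul_inv, ← relNorm_apply, (hf 1).relNorm_sum hprim isUnit_one]

end PhaseBases

section IntegralLift

variable {n : ℕ} {V ι : Type*} [AddCommGroup V] [Module (ZMod n) V]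
  (b : Module.Basis ι (ZMod n) V)

/-- The coordinates of a vector over `ℤ/n`, lifted to the integers `0, …, n - 1`. -/
noncomputable def intCoords (x : V) : ι → ℤ :=
  fun i => (b.repr x i).val

theorem exists_intCoords_add [NeZero n] (x y : V) :
    ∃ c : ι → ℤ, intCoords b (x + y) = intCoords b x + intCoords b y + (n : ℤ) • c := by
  have hdvd (i : ι) : (n : ℤ) ∣ intCoords b (x + y) i - (intCoords b x i + intCoords b y i) := by
    rw [← ZMod.intCast_zmod_eq_zero_iff_dvd]
    simp [intCoords]
  choose c hc using hdvd
  exact ⟨c, funext fun i => eq_add_of_sub_eq' (hc i)⟩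

variable [Fintype ι] [DecidableEq ι]

/-- The integral bilinear form whose Gram matrix is the entrywise lift to `0, …, n - 1` of the
Gram matrix of a bilinear form over `ℤ/n`. -/
noncomputable def intLift (β : LinearMap.BilinForm (ZMod n) V) :
    LinearMap.BilinForm ℤ (ι → ℤ) :=
  Matrix.toBilin' ((LinearMap.BilinForm.toMatrix b β).map fun z => (z.val : ℤ))

variable {β : LinearMap.BilinForm (ZMod n) V}

theorem isSymm_intLift (hβ : β.IsSymm) : (intLift b β).IsSymm := by
  rw [intLift, Matrix.isSymm_toBilin'_iff_isSymm]
  exact ((LinearMap.BilinForm.isSymm_toMatrix_iff_isSymm b).mpr hβ).map _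

theorem intCast_intLift_intCoords [NeZero n] (x y : V) :
    ((intLift b β (intCoords b x) (intCoords b y) : ℤ) : ZMod n) = β x y := by
  conv_rhs => rw [← Matrix.toBilin_toMatrix b β, Matrix.toBilin_apply]
  simp [intLift, intCoords, Matrix.toBilin'_apply]

end IntegralLift

theorem exists_zmod_two_mul_quadratic {n : ℕ} [NeZero n] (hn : Even n) {V : Type*}
    [AddCommGroup V] [Module (ZMod n) V] [Module.Free (ZMod n) V] [Module.Finite (ZMod n) V]
    {β : LinearMap.BilinForm (ZMod n) V} (hβ : β.IsSymm) :
    ∃ Q : V → ZMod (2 * n), ∀ x y,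
      Q (x + y) = Q x + Q y + 2 * ((β x y).val : ZMod (2 * n)) := by
  classical
  let b := Module.Free.chooseBasis (ZMod n) V
  let s := intCoords b
  let B := intLift b β
  have hB : ∀ u v, B u v = B v u := (isSymm_intLift b hβ).eq
  -- Replacing `s x` by `s x + n • c` changes `B (s x) (s x)` by
  -- `2 * n * B (s x) c + n ^ 2 * B c c`, which vanishes modulo `2 * n` because `n` is even.
  refine ⟨fun x => (B (s x) (s x) : ℤ), fun x y => ?_⟩
  obtain ⟨k, hk⟩ := hn
  obtain ⟨c, hc⟩ : ∃ c, s (x + y) = s x + s y + (n : ℤ) • c := exists_intCoords_add b x y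
  obtain ⟨e, he⟩ : (n : ℤ) ∣ B (s x) (s y) - (β x y).val := by
    rw [← ZMod.intCast_zmod_eq_zero_iff_dvd, Int.cast_sub, intCast_intLift_intCoords,
      Int.cast_natCast, ZMod.natCast_zmod_val, sub_self]
  have hexpand : B (s (x + y)) (s (x + y)) = B (s x) (s x) + B (s y) (s y) +
      2 * (β x y).val + (2 * n : ℕ) * (e + B (s x) c + B (s y) c + k * B c c) := by
    have hk' : (n : ℤ) = 2 * k := by rw [hk, Nat.cast_add, two_mul]
    simp only [hc, map_add, LinearMap.add_apply, map_smul, LinearMap.smul_apply, smul_eq_mul,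
      Nat.cast_mul, Nat.cast_ofNat]
    linear_combination 2 * he + hB (s y) (s x) + n * hB c (s x) + n * hB c (s y) +
      n * B c c * hk'
  dsimp only
  rw [hexpand, Int.cast_add, Int.cast_mul (2 * n : ℕ), Int.cast_natCast, ZMod.natCast_self,
    zero_mul, add_zero]
  push_cast
  rfl

section TraceCharacter

variable {F : Type*} [CommRing F] {l : ℕ} [Fact l.Prime] (K : Type*) [Field K]
  [Algebra (ZMod l) K] {σ : F →+* F} {ζ : F}

/-- The additive character `x ↦ ζ ^ Tr(x)` of an extension `K` of `𝔽_l`, for an `l`-th root of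
unity `ζ`. -/
noncomputable def traceChar (hζ : ζ ^ l = 1) : AddChar K F :=
  (AddChar.zmodChar l hζ).compAddMonoidHom (Algebra.trace (ZMod l) K).toAddMonoidHom

variable {K}

theorem traceChar_apply (hζ : ζ ^ l = 1) (x : K) :
    traceChar K hζ x = ζ ^ (Algebra.trace (ZMod l) K x).val :=
  rfl

theorem relNorm_traceChar (hζ : ζ ^ l = 1) (hσ : relNorm σ ζ = 1) (x : K) :
    relNorm σ (traceChar K hζ x) = 1 := by
  rw [traceChar_apply, map_pow, hσ, one_pow]

theorem isPrimitive_traceChar [Finite K] (hζ : IsPrimitiveRoot ζ l) :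
    (traceChar K hζ.pow_eq_one).IsPrimitive := by
  refine AddChar.IsPrimitive.of_ne_one fun h => ?_
  obtain ⟨x, hx⟩ := Algebra.trace_surjective (ZMod l) K 1
  have hone : traceChar K hζ.pow_eq_one x = 1 := by rw [h, AddChar.one_apply]
  rw [traceChar_apply, hx, ZMod.val_one, pow_one] at hone
  exact hζ.ne_one (Fact.out : l.Prime).one_lt hone

theorem isQuadraticPhase_traceChar_two [IsDomain F] [Algebra (ZMod 2) K]
    [FiniteDimensional (ZMod 2) K] {I : F} (hI : IsPrimitiveRoot I 4) (hσ : relNorm σ I = 1)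
    (hζ : IsPrimitiveRoot ζ 2) (a : K) :
    ∃ g, IsQuadraticPhase σ (traceChar K hζ.pow_eq_one) a g := by
  let β : LinearMap.BilinForm (ZMod 2) K :=
    Algebra.traceForm (ZMod 2) K ∘ₗ LinearMap.mulLeft (ZMod 2) a
  have hβ : β.IsSymm :=
    ⟨fun x y => congrArg (Algebra.trace (ZMod 2) K) (mul_right_comm a x y)⟩
  obtain ⟨Q, hQ⟩ := exists_zmod_two_mul_quadratic even_two hβ
  have hI2 : I ^ 2 = ζ := by
    rw [hζ.eq_neg_one_of_two_right, (hI.pow four_pos (b := 2) rfl).eq_neg_one_of_two_right]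
  refine ⟨fun x => AddChar.zmodChar 4 hI.pow_eq_one (Q x), fun x => ?_, fun x y => ?_⟩
  · rw [AddChar.zmodChar_apply, map_pow, hσ, one_pow]
  · have htwo (n : ℕ) : AddChar.zmodChar 4 hI.pow_eq_one (2 * n) = ζ ^ n := by
      rw [← hI2, ← pow_mul, ← AddChar.zmodChar_apply' hI.pow_eq_one]
      norm_cast
    rw [hQ, AddChar.map_add_eq_mul, AddChar.map_add_eq_mul, htwo]
    rfl

end TraceCharacter

theorem exists_isPrimitiveRoot_relNorm_eq_one_of_dvd {F : Type*} [CommSemiring F] {σ : F →+* F}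
    {N n : ℕ} (hN : 0 < N) (hn : n ∣ N) {z : F} (hz : IsPrimitiveRoot z N)
    (hσ : relNorm σ z = 1) : ∃ y, IsPrimitiveRoot y n ∧ relNorm σ y = 1 := by
  obtain ⟨e, rfl⟩ := hn
  exact ⟨z ^ e, hz.pow hN (mul_comm n e), by rw [map_pow, hσ, one_pow]⟩

section Existence

variable {F : Type*} [Field F] {σ : F →+* F}

theorem exists_isMUBFamily_of_isPrimitiveRoot_prime {l : ℕ} [Fact l.Prime] (K : Type*)
    [Field K] [Fintype K] [DecidableEq K] [Algebra (ZMod l) K] {ζ : F} (hζ : IsPrimitiveRoot ζ l)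
    (hσ : relNorm σ ζ = 1) (htwo : l = 2 → ∃ I, IsPrimitiveRoot I 4 ∧ relNorm σ I = 1) :
    ∃ B : Option K → K → K → F, IsMUBFamily_s9 σ B := by
  have hl : (l : F) ≠ 0 := hζ.neZero'.out
  have hK : (Fintype.card K : F) ≠ 0 := by
    rw [Module.card_eq_pow_finrank (K := ZMod l), ZMod.card, Nat.cast_pow]
    exact pow_ne_zero _ hl
  have hψ : ∀ x : K, relNorm σ (traceChar K hζ.pow_eq_one x) = 1 :=
    relNorm_traceChar hζ.pow_eq_one hσ
  refine exists_isMUBFamily_of_isQuadraticPhase hψ (isPrimitive_traceChar hζ) hK fun a => ?_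
  obtain rfl | hl2 := eq_or_ne l 2
  · obtain ⟨I, hI, hσI⟩ := htwo rfl
    exact isQuadraticPhase_traceChar_two hI hσI hζ a
  · have h2 : (2 : K) ≠ 0 := Ring.two_ne_zero <| by
      rwa [← Algebra.ringChar_eq (ZMod l) K, ZMod.ringChar_zmod_n]
    have hphase := IsQuadraticPhase.square hψ (a / 2)
    rw [mul_div_cancel₀ a h2] at hphase
    exact ⟨_, hphase⟩

theorem exists_isMUBFamily_of_isPrimePow {Q : ℕ} (hQ : IsPrimePow Q) {z : F}
    (hz : IsPrimitiveRoot z (4 * Q)) (hσ : relNorm σ z = 1) :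
    ∃ B : Fin (Q + 1) → Fin Q → Fin Q → F, IsMUBFamily_s9 σ B := by
  classical
  obtain ⟨l, k, hl, hk, rfl⟩ := (isPrimePow_nat_iff Q).mp hQ
  have : Fact l.Prime := ⟨hl⟩
  have hpos : 0 < 4 * l ^ k := Nat.mul_pos four_pos (pow_pos hl.pos k)
  let := Fintype.ofFinite (GaloisField l k)
  have hcard : Fintype.card (GaloisField l k) = l ^ k := by
    rw [Fintype.card_eq_nat_card, GaloisField.card l k hk.ne']
  obtain ⟨ζ, hζ, hσζ⟩ := exists_isPrimitiveRoot_relNorm_eq_one_of_dvd hpos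
    ((dvd_pow_self l hk.ne').mul_left 4) hz hσ
  obtain ⟨B, hB⟩ := exists_isMUBFamily_of_isPrimitiveRoot_prime (GaloisField l k) hζ hσζ fun _ =>
    exists_isPrimitiveRoot_relNorm_eq_one_of_dvd hpos (dvd_mul_right 4 _) hz hσ
  exact hB.exists_fin hcard (by rw [Fintype.card_option, hcard])

theorem exists_isMUBFamily_of_isPrimitiveRoot {ι : Type*} [Fintype ι] {Q : ι → ℕ}
    (hQ : ∀ j, IsPrimePow (Q j)) {d m : ℕ} (hd : d = ∏ j, Q j) (hm : ∀ j, m ≤ Q j) {z : F}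
    (hz : IsPrimitiveRoot z (4 * d)) (hσ : relNorm σ z = 1) :
    ∃ B : Fin (m + 1) → Fin d → Fin d → F, IsMUBFamily_s9 σ B := by
  classical
  have hpos : 0 < 4 * d := by
    rw [hd]
    exact Nat.mul_pos four_pos (prod_pos fun j _ => (hQ j).pos)
  have hfactor (j : ι) : ∃ B : Fin (m + 1) → Fin (Q j) → Fin (Q j) → F, IsMUBFamily_s9 σ B := by
    have hdvd : 4 * Q j ∣ 4 * d := mul_dvd_mul_left 4 (hd ▸ dvd_prod_of_mem Q (mem_univ j))
    obtain ⟨y, hy, hσy⟩ := exists_isPrimitiveRoot_relNorm_eq_one_of_dvd hpos hdvd hz hσ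
    obtain ⟨B, hB⟩ := exists_isMUBFamily_of_isPrimePow (hQ j) hy hσy
    exact hB.exists_fin (Fintype.card_fin _) (by simpa using hm j)
  choose B hB using hfactor
  exact (IsMUBFamily_s9.pi hB).exists_fin (by simp [hd]) (Fintype.card_fin _).ge

end Existence

section FiniteField

variable {F : Type*} [Field F]

theorem exists_isPrimitiveRoot_of_dvd_card_sub_one [Fintype F] {n : ℕ}
    (hn : n ∣ Fintype.card F - 1) : ∃ z : F, IsPrimitiveRoot z n := by
  obtain ⟨g, hg⟩ := IsCyclic.exists_ofOrder_eq_natCard (α := Fˣ)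
  rw [Nat.card_units, Nat.card_eq_fintype_card] at hg
  obtain ⟨e, he⟩ := hn
  have hroot : IsPrimitiveRoot (g : F) (Fintype.card F - 1) :=
    IsPrimitiveRoot.coe_units_iff.mpr (hg ▸ IsPrimitiveRoot.orderOf g)
  exact ⟨g ^ e, hroot.pow (Nat.sub_pos_of_lt Fintype.one_lt_card) (he.trans (mul_comm n e))⟩

variable {p : ℕ} [ExpChar F p] {r : ℕ}

theorem relNorm_iterateFrobenius (x : F) :
    relNorm (iterateFrobenius F p r) x = x ^ (p ^ r + 1) := by
  rw [relNorm_apply, iterateFrobenius_def, pow_succ]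

theorem sesqForm_iterateFrobenius {d : ℕ} (u v : Fin d → F) :
    sesqForm (iterateFrobenius F p r) u v = hermInner (p ^ r) u v := by
  simp only [sesqForm, hermInner, iterateFrobenius_def]

theorem IsMUBFamily_s9.isON {A : Type*} {d : ℕ} {B : A → Fin d → Fin d → F}
    (hB : IsMUBFamily_s9 (iterateFrobenius F p r) B) (a : A) : IsON (p ^ r) (B a) := fun i j => by
  rw [← sesqForm_iterateFrobenius, hB.orthonormal]

theorem IsMUBFamily_s9.isMUB {A : Type*} {d : ℕ} {B : A → Fin d → Fin d → F}
    (hB : IsMUBFamily_s9 (iterateFrobenius F p r) B) {a b : A} (hab : a ≠ b) :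
    IsMUB (p ^ r) (B a) (B b) := fun i j => by
  rw [← sesqForm_iterateFrobenius, ← relNorm_iterateFrobenius, hB.unbiased hab, Fintype.card_fin]

end FiniteField

theorem exists_isON_isMUB_of_dvd {ι : Type*} [Fintype ι] {Q : ι → ℕ}
    (hQ : ∀ j, IsPrimePow (Q j)) {d m : ℕ} (hd : d = ∏ j, Q j) (hm : ∀ j, m ≤ Q j) {p r : ℕ}
    [Fact p.Prime] (hdvd : 4 * d ∣ p ^ r + 1) {F : Type*} [Field F] [Fintype F]
    (hF : Fintype.card F = (p ^ r) ^ 2) :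
    ∃ B : Fin (m + 1) → Fin d → Fin d → F,
      (∀ i, IsON (p ^ r) (B i)) ∧ ∀ i j, i ≠ j → IsMUB (p ^ r) (B i) (B j) := by
  have : CharP F p := charP_of_card_eq_prime_pow (hF.trans (pow_mul p r 2).symm)
  have hcard : 4 * d ∣ Fintype.card F - 1 := by
    rw [hF, ← one_pow 2, Nat.sq_sub_sq]
    exact hdvd.mul_right _
  obtain ⟨z, hz⟩ := exists_isPrimitiveRoot_of_dvd_card_sub_one hcard
  have hnorm : relNorm (iterateFrobenius F p r) z = 1 := by
    rw [relNorm_iterateFrobenius, hz.pow_eq_one_iff_dvd]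
    exact hdvd
  obtain ⟨B, hB⟩ := exists_isMUBFamily_of_isPrimitiveRoot hQ hd hm hz hnorm
  exact ⟨B, hB.isON, fun _ _ => hB.isMUB⟩

theorem infinite_setOf_prime_and_dvd_add_one (N : ℕ) [NeZero N] :
    {p : ℕ | p.Prime ∧ N ∣ p + 1}.Infinite := by
  refine (Nat.infinite_setOfPred_prime_and_eq_mod (q := N) isUnit_one.neg).mono ?_
  rintro p ⟨hp, hpN⟩
  refine ⟨hp, ?_⟩
  rw [← ZMod.natCast_eq_zero_iff, Nat.cast_add_one, hpN, neg_add_cancel]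

theorem stmt9_general {ι : Type*} [Fintype ι] {Q : ι → ℕ} (hQ : ∀ j, IsPrimePow (Q j))
    {d m : ℕ} (hd : d = ∏ j, Q j) (hm : ∀ j, m ≤ Q j) :
    {p : ℕ | p.Prime ∧ ∀ r : ℕ, Odd r →
      ∀ (F : Type*) [Field F] [Fintype F], Fintype.card F = (p ^ r) ^ 2 →
        ∃ B : Fin (m + 1) → Fin d → Fin d → F,
          (∀ i, IsON (p ^ r) (B i)) ∧
          ∀ i j, i ≠ j → IsMUB (p ^ r) (B i) (B j)}.Infinite := by
  have : NeZero d := ⟨hd ▸ prod_ne_zero_iff.mpr fun j _ => (hQ j).ne_zero⟩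
  refine (infinite_setOf_prime_and_dvd_add_one (4 * d)).mono ?_
  rintro p ⟨hp, hdvd⟩
  refine ⟨hp, fun r hr F _ _ hF => ?_⟩
  have : Fact p.Prime := ⟨hp⟩
  have hpow : p + 1 ∣ p ^ r + 1 := by simpa using hr.nat_add_dvd_pow_add_pow p 1
  exact exists_isON_isMUB_of_dvd hQ hd hm (hdvd.trans hpow) hF

/-- Write `d = ∏_j l_j^{k_j}` as a product of prime powers with
`l_1^{k_1} < … < l_n^{k_n}`.  Then there are infinitely many primes `p` admitting an
`r_p ≥ 1` such that, with `q = p^{r_p}`, the space `𝔽_{q²}^d` contains `l_1^{k_1} + 1`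
pairwise mutually unbiased orthonormal bases, i.e. `M_d(𝔽_{q²}) ≥ l_1^{k_1} + 1`. -/
theorem stmt9 (d : ℕ) (hd : 2 ≤ d) (n : ℕ) (hn : 0 < n)
    (l w : Fin n → ℕ) (hl : ∀ j, (l j).Prime) (hw : ∀ j, 1 ≤ w j)
    (hprod : d = ∏ j, l j ^ w j)
    (hdistinct : ∀ i j : Fin n, i ≠ j → l i ≠ l j)
    (hmono : ∀ i j : Fin n, i < j → l i ^ w i < l j ^ w j) :
    {p : ℕ | p.Prime ∧ ∃ r : ℕ, 1 ≤ r ∧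
      ∀ (F : Type) [Field F] [Fintype F], Fintype.card F = (p ^ r) ^ 2 →
        ∃ B : Fin (l ⟨0, hn⟩ ^ w ⟨0, hn⟩ + 1) → Fin d → Fin d → F,
          (∀ i, IsON (p ^ r) (B i)) ∧
          ∀ i j, i ≠ j → IsMUB (p ^ r) (B i) (B j)}.Infinite := by
  have hmin : ∀ j, l ⟨0, hn⟩ ^ w ⟨0, hn⟩ ≤ l j ^ w j := fun j =>
    StrictMono.monotone (f := fun j => l j ^ w j) (fun i j => hmono i j) (Nat.zero_le j.val)
  refine (stmt9_general (fun j => (hl j).isPrimePow.pow (Nat.one_le_iff_ne_zero.mp (hw j))) hprod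
    hmin).mono ?_
  exact fun p hp => ⟨hp.1, 1, le_rfl, hp.2 1 odd_one⟩
end

section
/- Let q be an odd prime power with q ≡ 1 (mod 4). Then there exist two mutually unbiased orthonormal bases of 𝔽_{q²}^2, but there is no set of three pairwise mutually unbiased orthonormal bases of 𝔽_{q²}^2; that is, M_2(𝔽_{q²}) = 2. -/
open Finset

/-!
A vector `u` unbiased to an orthonormal basis `(a₀, a₁)` has coordinates of norm `1/2` in it. If `v`
is another such vector, Parseval's identity writes `⟨u, v⟩` as a sum `a + b` of two terms of norm
`1/4`. With `star x = x ^ q`, this sum has norm `1/2` exactly when the cross term `star a * b` is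
skew, and then `s = 4 * (star a * b)` satisfies `star s = -s` and `s ^ 2 = -1`. When
`q ≡ 1 (mod 4)`, a square root of `-1` is instead fixed by `star`, so a third basis cannot exist.
Two bases do exist: the relative norm is surjective, so `1/2` is the norm of some `x`, and the rows
of the Hadamard matrix scaled by `x` are unbiased to the standard basis.
-/

theorem exists_pow_eq_of_pow_eq_one {G : Type*} [Group G] [IsCyclic G] {m n : ℕ} (hm : m ≠ 0)
    (hG : Nat.card G = m * n) {a : G} (ha : a ^ m = 1) : ∃ x, x ^ n = a := by
  obtain ⟨g, hg⟩ := IsCyclic.exists_generator (α := G)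
  obtain ⟨k, rfl⟩ := Subgroup.mem_zpowers_iff.1 (hg a)
  have hdvd : (m : ℤ) * n ∣ m * k := by
    rw [← Nat.cast_mul, ← hG, ← orderOf_eq_card_of_forall_mem_zpowers hg,
      orderOf_dvd_iff_zpow_eq_one, mul_comm, zpow_mul, zpow_natCast, ha]
  obtain ⟨l, rfl⟩ := Int.dvd_of_mul_dvd_mul_left (mod_cast hm) hdvd
  exact ⟨g ^ l, by rw [mul_comm, zpow_mul, zpow_natCast]⟩

theorem pow_eq_self_of_sq_eq_neg_one {M : Type*} [Monoid M] [HasDistribNeg M] {q : ℕ}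
    (hq : q % 4 = 1) {s : M} (hs : s ^ 2 = -1) : s ^ q = s := by
  have hs4 : s ^ 4 = 1 := by rw [show 4 = 2 * 2 from rfl, pow_mul, hs, neg_one_sq]
  rw [pow_eq_pow_mod q hs4, hq, pow_one]

section StarRing

variable {R : Type*} [CommRing R] [StarRing R]

theorem exists_star_eq_neg_and_sq_eq_neg_one {a b : R} (ha : 4 * (star a * a) = 1)
    (hb : 4 * (star b * b) = 1) (hab : 2 * (star (a + b) * (a + b)) = 1) :
    ∃ s : R, star s = -s ∧ s ^ 2 = -1 := by
  have hstar : star (4 * (star a * b)) = 4 * (star b * a) := by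
    simp only [star_mul', star_star, star_ofNat, mul_comm a]
  have hskew : star (4 * (star a * b)) = -(4 * (star a * b)) := by
    rw [star_add] at hab
    linear_combination hstar + 2 * hab - ha - hb
  have hnorm : 4 * (star a * b) * star (4 * (star a * b)) = 1 := by
    linear_combination 4 * (star a * b) * hstar + 4 * (star b * b) * ha + hb
  exact ⟨4 * (star a * b), hskew, by linear_combination 4 * (star a * b) * hskew - hnorm⟩

theorem star_mulVec_dotProduct_mulVec_of_mem_unitaryGroup {n : Type*} [Fintype n] [DecidableEq n]
    {U : Matrix n n R} (hU : U ∈ Matrix.unitaryGroup n R) (u v : n → R) :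
    star (U.mulVec u) ⬝ᵥ U.mulVec v = star u ⬝ᵥ v := by
  rw [Matrix.star_mulVec, Matrix.dotProduct_mulVec, Matrix.vecMul_vecMul,
    ← Matrix.star_eq_conjTranspose, Matrix.mem_unitaryGroup_iff'.1 hU, Matrix.vecMul_one]

end StarRing

section Unbiased

variable {F : Type*} [Field F] [StarRing F] {q d : ℕ} (hstar : ∀ x : F, star x = x ^ q)
include hstar

theorem star_mul_self_eq_pow_succ (x : F) : star x * x = x ^ (q + 1) := by
  rw [hstar, pow_succ]

theorem hermInner_eq_star_dotProduct (u v : Fin d → F) : hermInner q u v = star u ⬝ᵥ v := by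
  simp only [hermInner, dotProduct, Pi.star_apply, hstar]

theorem IsON.map_star_mem_unitaryGroup {b : Fin d → Fin d → F} (hb : IsON q b) :
    (Matrix.of b).map star ∈ Matrix.unitaryGroup (Fin d) F := by
  rw [Matrix.mem_unitaryGroup_iff]
  ext i j
  simpa [Matrix.mul_apply, Matrix.one_apply, dotProduct, hermInner_eq_star_dotProduct hstar]
    using hb i j

theorem IsON.parseval {b : Fin d → Fin d → F} (hb : IsON q b) (u v : Fin d → F) :
    hermInner q (fun i ↦ hermInner q (b i) u) (fun i ↦ hermInner q (b i) v) = hermInner q u v := by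
  simp only [hermInner_eq_star_dotProduct hstar]
  exact star_mulVec_dotProduct_mulVec_of_mem_unitaryGroup (hb.map_star_mem_unitaryGroup hstar) u v

theorem IsON.exists_star_eq_neg_and_sq_eq_neg_one_of_unbiased (h2 : (2 : F) ≠ 0)
    {b : Fin 2 → Fin 2 → F} (hb : IsON q b) {u v : Fin 2 → F}
    (hu : ∀ i, hermInner q (b i) u ^ (q + 1) = 2⁻¹)
    (hv : ∀ i, hermInner q (b i) v ^ (q + 1) = 2⁻¹) (huv : hermInner q u v ^ (q + 1) = 2⁻¹) :
    ∃ s : F, star s = -s ∧ s ^ 2 = -1 := by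
  set x := fun i ↦ hermInner q (b i) u
  set y := fun i ↦ hermInner q (b i) v
  have hterm (i : Fin 2) : 4 * (star (star (x i) * y i) * (star (x i) * y i)) = 1 := by
    have hmul : star (star (x i) * y i) * (star (x i) * y i) =
        (star (x i) * x i) * (star (y i) * y i) := by
      rw [star_mul', star_star]
      ring
    rw [hmul, star_mul_self_eq_pow_succ hstar, star_mul_self_eq_pow_succ hstar, hu, hv]
    field_simp
    norm_num
  have hsum : star (x 0) * y 0 + star (x 1) * y 1 = hermInner q u v := by
    rw [← hb.parseval hstar, hermInner, Fin.sum_univ_two, hstar, hstar]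
  refine exists_star_eq_neg_and_sq_eq_neg_one (hterm 0) (hterm 1) ?_
  rw [hsum, star_mul_self_eq_pow_succ hstar, huv, mul_inv_cancel₀ h2]

end Unbiased

section Hadamard

variable {F : Type*} [Field F] {q d : ℕ}

theorem hermInner_single_one (hq : q ≠ 0) (i : Fin d) (v : Fin d → F) :
    hermInner q (Pi.single i 1) v = v i := by
  simp [hermInner, Pi.single_apply, ite_pow, hq]

theorem isON_single_one (hq : q ≠ 0) : IsON q fun i : Fin d ↦ Pi.single (M := fun _ ↦ F) i 1 := by
  intro i j
  simp only [hermInner_single_one hq, Pi.single_apply]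

theorem isON_hadamard (hodd : Odd q) {x : F} (hx : 2 * x ^ (q + 1) = 1) :
    IsON q ![![x, x], ![x, -x]] := by
  have hadd : x ^ q * x + x ^ q * x = 1 := by rw [← pow_succ, ← two_mul, hx]
  intro i j
  fin_cases i <;> fin_cases j <;> simp [hermInner, Fin.sum_univ_two, hodd.neg_pow, hadd]

theorem isMUB_single_one_hadamard (hodd : Odd q) {x : F} (hx : x ^ (q + 1) = 2⁻¹) :
    IsMUB q (fun i : Fin 2 ↦ Pi.single i 1) ![![x, x], ![x, -x]] := by
  intro i j
  rw [hermInner_single_one hodd.pos.ne']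
  fin_cases i <;> fin_cases j <;> simp [hodd.add_one.neg_pow, hx]

end Hadamard

section FiniteField

variable {F : Type*} [Field F] [Fintype F] {q : ℕ} (hF : Fintype.card F = q ^ 2)
include hF

theorem two_ne_zero_of_card_eq_sq_of_odd (hodd : Odd q) : (2 : F) ≠ 0 := by
  refine Ring.two_ne_zero fun hchar ↦ ?_
  have heven : Even (Fintype.card F) := Nat.even_iff.2 (FiniteField.even_card_of_char_two hchar)
  exact Nat.not_even_iff_odd.2 hodd.pow (hF ▸ heven)

theorem add_pow_of_card_eq_sq (x y : F) : (x + y) ^ q = x ^ q + y ^ q := by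
  obtain ⟨p, n, hp, -, rfl⟩ : IsPrimePow q :=
    (isPrimePow_pow_iff two_ne_zero).1 (hF ▸ FiniteField.isPrimePow_card F)
  have : Fact p.Prime := ⟨hp.nat_prime⟩
  have : CharP F p := charP_of_card_eq_prime_pow (hF.trans (pow_mul p n 2).symm)
  exact add_pow_char_pow x y p n

/-- The star structure on a field with `q ^ 2` elements given by the involution `x ↦ x ^ q`, which
makes Mathlib's star rings and unitary groups available. It is not an instance, since it depends on
`hF`. -/
abbrev frobeniusStarRing : StarRing F where
  star x := x ^ q
  star_involutive x := by
    change (x ^ q) ^ q = x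
    rw [← pow_mul, ← sq, ← hF, FiniteField.pow_card]
  star_mul x y := by rw [mul_pow, mul_comm]
  star_add := add_pow_of_card_eq_sq hF

theorem exists_pow_succ_eq_of_pow_eq_self {a : F} (ha : a ^ q = a) : ∃ x, x ^ (q + 1) = a := by
  obtain rfl | ha0 := eq_or_ne a 0
  · exact ⟨0, zero_pow q.succ_ne_zero⟩
  have hq : 1 < q := (Nat.one_lt_pow_iff two_ne_zero).1 (hF ▸ Fintype.one_lt_card)
  have hcard : Nat.card Fˣ = (q - 1) * (q + 1) := by
    rw [Nat.card_units, Nat.card_eq_fintype_card, hF, mul_comm]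
    exact Nat.sq_sub_sq q 1
  have ha1 : Units.mk0 a ha0 ^ (q - 1) = 1 := by
    ext
    refine mul_right_cancel₀ ha0 ?_
    rw [Units.val_pow_eq_pow_val, Units.val_mk0, pow_sub_one_mul hq.ne_bot, ha, Units.val_one,
      one_mul]
  obtain ⟨x, hx⟩ := exists_pow_eq_of_pow_eq_one (Nat.sub_ne_zero_of_lt hq) hcard ha1
  exact ⟨x, congrArg Units.val hx⟩

theorem exists_pow_succ_eq_two_inv : ∃ x : F, x ^ (q + 1) = 2⁻¹ := by
  let := frobeniusStarRing hF
  refine exists_pow_succ_eq_of_pow_eq_self hF ?_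
  change star (2⁻¹ : F) = 2⁻¹
  rw [star_inv₀, star_ofNat]

end FiniteField

/-- For an odd prime power `q ≡ 1 (mod 4)` there exist two mutually
unbiased orthonormal bases of `𝔽_{q²}^2`, but no set of three pairwise mutually unbiased
orthonormal bases; that is, `M_2(𝔽_{q²}) = 2`. -/
theorem stmt15 (q : ℕ) (hq : IsPrimePow q) (hodd : Odd q) (hmod : q % 4 = 1)
    (F : Type) [Field F] [Fintype F] (hF : Fintype.card F = q ^ 2) :
    (∃ B C : Fin 2 → Fin 2 → F, IsON q B ∧ IsON q C ∧ IsMUB q B C)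
    ∧ ¬ ∃ B : Fin 3 → Fin 2 → Fin 2 → F,
        (∀ i, IsON q (B i)) ∧ ∀ i j, i ≠ j → IsMUB q (B i) (B j) := by
  have h2 : (2 : F) ≠ 0 := two_ne_zero_of_card_eq_sq_of_odd hF hodd
  constructor
  · obtain ⟨x, hx⟩ := exists_pow_succ_eq_two_inv hF
    exact ⟨_, _, isON_single_one hodd.pos.ne',
      isON_hadamard hodd (by rw [hx, mul_inv_cancel₀ h2]), isMUB_single_one_hadamard hodd hx⟩
  · rintro ⟨B, hON, hMUB⟩
    let := frobeniusStarRing hF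
    obtain ⟨s, hskew, hsq⟩ : ∃ s : F, star s = -s ∧ s ^ 2 = -1 :=
      (hON 0).exists_star_eq_neg_and_sq_eq_neg_one_of_unbiased (fun _ ↦ rfl) h2
        (fun i ↦ hMUB 0 1 (by decide) i 0) (fun i ↦ hMUB 0 2 (by decide) i 0)
        (hMUB 1 2 (by decide) 0 0)
    have hfixed : star s = s := pow_eq_self_of_sq_eq_neg_one hmod hsq
    have hs0 : s = 0 := by
      have hdouble : 2 * s = 0 := by linear_combination hskew - hfixed
      exact (mul_eq_zero.1 hdouble).resolve_left h2
    simp [hs0] at hsq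
end
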